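/- Let q be a complex number with 0 < |q| < 1, fix a square root q^{1/2} of q, and let a, b be complex numbers with max{|a|,|b|} < 1. Then ∫₀^π h(cos θ; 1, -1, q^{1/2}, -q^{1/2}) / h(cos θ; a, b) dθ = 2π / ((q; q)_∞ (ab; q)_∞). -/

import Mathlib

open Complex MeasureTheory

/-- The q-shifted factorial `(x; q)_∞ = ∏_{k=0}^∞ (1 - x q^k)`. -/
noncomputable def qp (q x : ℂ) : ℂ := ∏' k : ℕ, (1 - x * q ^ k)

/-- The finite q-shifted factorial `(x; q)_n = ∏_{k=0}^{n-1} (1 - x q^k)`. -/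
noncomputable def qpn (q x : ℂ) (n : ℕ) : ℂ := ∏ k ∈ Finset.range n, (1 - x * q ^ k)

/-- For `x = cos θ`, `h(x; λ) = (λ e^{iθ}; q)_∞ (λ e^{-iθ}; q)_∞`. -/
noncomputable def hh (q : ℂ) (θ : ℝ) (l : ℂ) : ℂ :=
  qp q (l * Complex.exp ((θ : ℂ) * Complex.I)) *
    qp q (l * Complex.exp (-((θ : ℂ) * Complex.I)))

/-!
With `z = e^{iθ}` the integral is `π` times the average over the unit circle of
`w(a, b; z) = (z², z⁻²; q)_∞ / (az, a/z, bz, b/z; q)_∞`. By the Cauchy theorem, if `f` is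
holomorphic on `|q| ≤ |z| ≤ 1`, then `f(z)` and `f(qz)` have the same average, so `q`-differences
`f(z) - f(qz)` average to zero. Since `w(qa, b; z) - (1 - ab) w(a, b; z)` is such a `q`-difference,
`(ab; q)_∞` times the average of `w(a, b; ·)` is invariant under `a ↦ qa`; iterating and using
continuity at `0`, it equals its value at `a = 0`. By symmetry only `a = b = 0` is left.

Substituting `z` for `z²` there leaves the average of `(z, z⁻¹; q)_∞ = θ(z) + θ(qz)`, where
`θ(z) = (z, q/z; q)_∞`. The same invariance argument, applied to `θ(z) / (b/z; q)_∞` as a function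
of `b`, compares `θ` (at `b = 0`) with the entire function `(z; q)_∞` (at `b = q`), whose average is
`1`; thus `θ` has average `1 / (q; q)_∞`.
-/

open Metric Set Filter Topology

section CircleAverage

open Real (circleAverage)

variable {E : Type*} [NormedAddCommGroup E]

theorem circleAverage_comp_mul_left [NormedSpace ℝ E] (f : ℂ → E) (s : ℂ) (R : ℝ) :
    circleAverage (fun z => f (s * z)) 0 R = circleAverage f 0 (‖s‖ * R) := by
  have circleMap_add_arg (θ : ℝ) : s * circleMap 0 R θ = circleMap 0 (‖s‖ * R) (θ + s.arg) := by
    nth_rewrite 1 [← norm_mul_exp_arg_mul_I s]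
    simp only [circleMap_zero, ofReal_mul, ofReal_add, add_mul, Complex.exp_add]
    ring
  rw [Real.circleAverage_eq_integral_add (f := f) s.arg, Real.circleAverage_def]
  simp only [circleMap_add_arg]

theorem circleAverage_comp_pow [NormedSpace ℝ E] {f : ℂ → E} {n : ℕ} {R : ℝ} (hn : n ≠ 0)
    (hf : CircleIntegrable f 0 (R ^ n)) :
    circleAverage (fun z => f (z ^ n)) 0 R = circleAverage f 0 (R ^ n) := by
  set g : ℝ → E := fun θ => f (circleMap 0 (R ^ n) θ)
  have g_periodic : Function.Periodic g (2 * Real.pi) := (periodic_circleMap 0 (R ^ n)).comp f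
  have integral_n_turns : ∫ θ in (0 : ℝ)..n * (2 * Real.pi), g θ =
      (n : ℝ) • ∫ θ in (0 : ℝ)..2 * Real.pi, g θ := by
    simpa [Nat.cast_smul_eq_nsmul] using g_periodic.intervalIntegral_add_zsmul_eq n 0
      fun _ _ => g_periodic.intervalIntegrable₀ Real.two_pi_pos.ne' hf _ _
  have integral_comp : ∫ θ in (0 : ℝ)..2 * Real.pi, g (n * θ) =
      ∫ θ in (0 : ℝ)..2 * Real.pi, g θ := by
    rw [intervalIntegral.integral_comp_mul_left g (Nat.cast_ne_zero.mpr hn), mul_zero,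
      integral_n_turns, inv_smul_smul₀ (Nat.cast_ne_zero.mpr hn)]
  simp only [Real.circleAverage_def, circleMap_zero_pow]
  exact congrArg _ integral_comp

theorem intervalIntegral_zero_pi_eq_pi_smul_circleAverage [NormedSpace ℝ E] {f : ℂ → E}
    (hf : CircleIntegrable f 0 1) (hf_inv : ∀ z ∈ sphere (0 : ℂ) 1, f z⁻¹ = f z) :
    ∫ θ in (0 : ℝ)..Real.pi, f (circleMap 0 1 θ) = Real.pi • circleAverage f 0 1 := by
  set g : ℝ → E := fun θ => f (circleMap 0 1 θ)
  have g_periodic : Function.Periodic g (2 * Real.pi) := (periodic_circleMap 0 1).comp f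
  have g_integrable (s t : ℝ) : IntervalIntegrable g volume s t :=
    g_periodic.intervalIntegrable₀ Real.two_pi_pos.ne' hf s t
  have g_even (θ : ℝ) : g (-θ) = g θ := by
    have := hf_inv _ (circleMap_mem_sphere 0 zero_le_one θ)
    simpa [circleMap_zero_inv] using this
  have integral_neg_pi : ∫ θ in -Real.pi..0, g θ = ∫ θ in (0 : ℝ)..Real.pi, g θ := by
    simpa [g_even] using (intervalIntegral.integral_comp_neg g (a := 0) (b := Real.pi)).symm
  have integral_full : ∫ θ in (0 : ℝ)..2 * Real.pi, g θ =
      (2 : ℝ) • ∫ θ in (0 : ℝ)..Real.pi, g θ := by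
    have shift := g_periodic.intervalIntegral_add_eq 0 (-Real.pi)
    rw [zero_add, neg_add_eq_sub, two_mul, add_sub_cancel_right, ← two_mul] at shift
    rw [shift, ← intervalIntegral.integral_add_adjacent_intervals (g_integrable (-Real.pi) 0)
      (g_integrable 0 Real.pi), integral_neg_pi, two_smul]
  rw [Real.circleAverage_def, integral_full, smul_smul, smul_smul]
  field_simp
  rw [one_smul]

theorem continuousOn_circleAverage_of_continuousOn_uncurry [NormedSpace ℝ E] {X : Type*}
    [TopologicalSpace X] {F : X → ℂ → E} {s : Set X} {c : ℂ} {R : ℝ}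
    (hF : ContinuousOn (Function.uncurry F) (s ×ˢ sphere c |R|)) :
    ContinuousOn (fun x => circleAverage (F x) c R) s := by
  rw [continuousOn_iff_continuous_domRestrict]
  refine (intervalIntegral.continuous_parametric_intervalIntegral_of_continuous'
    (f := fun (x : s) θ => F x (circleMap c R θ)) ?_ _ _).const_smul _
  exact hF.comp_continuous (f := fun p : s × ℝ => ((p.1 : X), circleMap c R p.2)) (by fun_prop)
    fun p => ⟨p.1.2, circleMap_mem_sphere' c R p.2⟩

theorem circleAverage_eq_of_differentiableAt_annulus [NormedSpace ℂ E] {f : ℂ → E} {c : ℂ}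
    {r R : ℝ} (hr : 0 < r) (hrR : r ≤ R)
    (hf : ∀ z, r ≤ ‖z - c‖ → ‖z - c‖ ≤ R → DifferentiableAt ℂ f z) :
    circleAverage f c r = circleAverage f c R := by
  rw [Real.circleAverage_eq_circleIntegral hr.ne',
    Real.circleAverage_eq_circleIntegral (hr.trans_le hrR).ne',
    circleIntegral_sub_center_inv_smul_eq_of_differentiable_on_annulus_off_countable hr hrR
      countable_empty]
  · rintro z ⟨hzR, hzr⟩
    rw [mem_closedBall_iff_norm] at hzR
    rw [mem_ball_iff_norm, not_lt] at hzr
    exact (hf z hzr hzR).continuousAt.continuousWithinAt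
  · rintro z ⟨⟨hzR, hzr⟩, -⟩
    rw [mem_ball_iff_norm] at hzR
    rw [mem_closedBall_iff_norm, not_le] at hzr
    exact hf z hzr.le hzR.le

theorem circleAverage_comp_mul_left_eq [NormedSpace ℂ E] {f : ℂ → E} {s : ℂ} (hs : s ≠ 0)
    (hs1 : ‖s‖ ≤ 1) (hf : ∀ z, ‖s‖ ≤ ‖z‖ → ‖z‖ ≤ 1 → DifferentiableAt ℂ f z) :
    circleAverage (fun z => f (s * z)) 0 1 = circleAverage f 0 1 := by
  rw [circleAverage_comp_mul_left, mul_one]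
  exact circleAverage_eq_of_differentiableAt_annulus (norm_pos_iff.mpr hs) hs1
    (by simpa only [sub_zero] using hf)

theorem circleAverage_eq_mul_of_eq_mul_add_mul_sub_comp {F f g : ℂ → ℂ} {c d s : ℂ} (hs : s ≠ 0)
    (hs1 : ‖s‖ ≤ 1) (hf : ∀ z, ‖s‖ ≤ ‖z‖ → ‖z‖ ≤ 1 → DifferentiableAt ℂ f z)
    (hg : CircleIntegrable g 0 1)
    (hF : ∀ z, ‖z‖ = 1 → F z = c * g z + d * (f z - f (s * z))) :
    circleAverage F 0 1 = c * circleAverage g 0 1 := by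
  have f_integrable : CircleIntegrable f 0 1 :=
    ContinuousOn.circleIntegrable zero_le_one fun z hz => by
      rw [mem_sphere_zero_iff_norm] at hz
      exact (hf z (hs1.trans_eq hz.symm) hz.le).continuousAt.continuousWithinAt
  have f_comp_integrable : CircleIntegrable (fun z => f (s * z)) 0 1 :=
    ContinuousOn.circleIntegrable zero_le_one fun z hz => by
      rw [mem_sphere_zero_iff_norm] at hz
      have norm_mul_eq : ‖s * z‖ = ‖s‖ := by rw [norm_mul, hz, mul_one]
      exact ((hf (s * z) norm_mul_eq.ge (norm_mul_eq.trans_le hs1)).continuousAt.comp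
        (by fun_prop)).continuousWithinAt
  have F_eq : EqOn F (c • g + d • (f - fun z => f (s * z))) (sphere 0 |1|) := fun z hz =>
    hF z (by simpa using hz)
  rw [Real.circleAverage_congr_sphere F_eq, Real.circleAverage_add hg.const_smul
    (f_integrable.sub f_comp_integrable).const_smul, Real.circleAverage_smul,
    Real.circleAverage_smul, Real.circleAverage_sub f_integrable f_comp_integrable,
    circleAverage_comp_mul_left_eq hs hs1 hf, sub_self, smul_zero, add_zero, smul_eq_mul]

end CircleAverage

theorem apply_eq_apply_zero_of_apply_mul_left_eq {R Y : Type*} [SeminormedRing R]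
    [TopologicalSpace Y] [T2Space Y] {φ : R → Y} {q x : R} {r : ℝ} (hq : ‖q‖ < 1)
    (hφ : ContinuousAt φ 0) (hφq : ∀ y ∈ ball 0 r, φ (q * y) = φ y) (hx : x ∈ ball 0 r) :
    φ x = φ 0 := by
  have iterate (n : ℕ) : q ^ n * x ∈ ball 0 r ∧ φ (q ^ n * x) = φ x := by
    induction n with
    | zero => simpa using hx
    | succ n ih =>
      rw [pow_succ', mul_assoc]
      refine ⟨?_, (hφq _ ih.1).trans ih.2⟩
      rw [mem_ball_zero_iff] at ih ⊢
      exact (norm_mul_le _ _).trans_lt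
        ((mul_le_of_le_one_left (norm_nonneg _) hq.le).trans_lt ih.1)
  have orbit_tendsto : Tendsto (fun n : ℕ => q ^ n * x) atTop (𝓝 0) := by
    simpa using (tendsto_pow_atTop_nhds_zero_of_norm_lt_one hq).mul_const x
  have := hφ.tendsto.comp orbit_tendsto
  simp only [Function.comp_def, iterate] at this
  exact tendsto_nhds_unique tendsto_const_nhds this

section QPochhammer

variable {q : ℂ}

theorem summable_norm_mul_pow (hq : ‖q‖ < 1) (x : ℂ) :
    Summable fun k : ℕ => ‖-(x * q ^ k)‖ := by
  simpa only [norm_neg, norm_mul, norm_pow] using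
    (summable_geometric_of_lt_one (norm_nonneg q) hq).mul_left ‖x‖

theorem multipliable_one_sub_mul_pow (hq : ‖q‖ < 1) (x : ℂ) :
    Multipliable fun k : ℕ => 1 - x * q ^ k := by
  simpa only [sub_eq_add_neg] using multipliable_one_add_of_summable (summable_norm_mul_pow hq x)

theorem qp_zero (q : ℂ) : qp q 0 = 1 := by simp [qp]

theorem qp_eq_one_sub_mul_qp (hq : ‖q‖ < 1) (x : ℂ) : qp q x = (1 - x) * qp q (q * x) := by
  have shift (k : ℕ) : 1 - x * q ^ (k + 1) = 1 - q * x * q ^ k := by ring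
  simp only [qp]
  rw [tprod_eq_zero_mul']
  · simp only [shift, pow_zero, mul_one]
  · simpa only [shift] using multipliable_one_sub_mul_pow hq (q * x)

theorem qp_ne_zero (hq : ‖q‖ < 1) {x : ℂ} (hx : ‖x‖ < 1) : qp q x ≠ 0 := by
  simp only [qp, sub_eq_add_neg]
  refine tprod_one_add_ne_zero_of_summable (fun k hk => ?_) (summable_norm_mul_pow hq x)
  have norm_lt_one : ‖x * q ^ k‖ < 1 := by
    rw [norm_mul, norm_pow]
    exact mul_lt_one_of_nonneg_of_lt_one_left (norm_nonneg x) hx (pow_le_one₀ (norm_nonneg q) hq.le)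
  rw [← sub_eq_add_neg, sub_eq_zero] at hk
  rw [← hk, norm_one] at norm_lt_one
  exact lt_irrefl 1 norm_lt_one

theorem qp_mul_ne_zero (hq : ‖q‖ < 1) {a z : ℂ} (ha : ‖a‖ < 1) (hz : ‖z‖ ≤ 1) :
    qp q (a * z) ≠ 0 :=
  qp_ne_zero hq (norm_mul a z ▸ mul_lt_one_of_nonneg_of_lt_one_left (norm_nonneg a) ha hz)

theorem qp_div_ne_zero (hq : ‖q‖ < 1) {a z : ℂ} (haz : ‖a‖ < ‖z‖) : qp q (a / z) ≠ 0 :=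
  qp_ne_zero hq (norm_div a z ▸ (div_lt_one ((norm_nonneg a).trans_lt haz)).mpr haz)

theorem differentiable_qp (hq : ‖q‖ < 1) : Differentiable ℂ (qp q) := by
  intro x
  set U : Set ℂ := ball 0 (‖x‖ + 1)
  have partial_products : HasProdLocallyUniformlyOn (fun (k : ℕ) y => 1 + -(y * q ^ k))
      (fun y => ∏' k : ℕ, (1 + -(y * q ^ k))) U := by
    refine Summable.hasProdLocallyUniformlyOn_nat_one_add isOpen_ball
      ((summable_geometric_of_lt_one (norm_nonneg q) hq).mul_left (‖x‖ + 1))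
      (.of_forall fun k y hy => ?_) fun k => by fun_prop
    rw [norm_neg, norm_mul, norm_pow]
    gcongr
    exact (mem_ball_zero_iff.mp hy).le
  have differentiableOn_tprod := partial_products.differentiableOn
    (.of_forall fun _ => by fun_prop) isOpen_ball
  simp only [← sub_eq_add_neg] at differentiableOn_tprod
  exact differentiableOn_tprod.differentiableAt (isOpen_ball.mem_nhds (by simp))

theorem qp_mul_qp_neg_mul_qp_sqrt_mul_qp_neg_sqrt {u : ℂ} (hq : ‖q‖ < 1) (hu : u ^ 2 = q) (x : ℂ) :
    qp q x * qp q (-x) * qp q (u * x) * qp q (-(u * x)) = qp q (x ^ 2) := by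
  have even_factor (k : ℕ) :
      1 - x ^ 2 * q ^ (2 * k) = (1 - x * q ^ k) * (1 - -x * q ^ k) := by ring
  have odd_factor (k : ℕ) :
      1 - x ^ 2 * q ^ (2 * k + 1) = (1 - u * x * q ^ k) * (1 - -(u * x) * q ^ k) := by
    rw [← hu]; ring
  have mult := multipliable_one_sub_mul_pow hq
  have even_mul_odd := tprod_even_mul_odd (f := fun k : ℕ => 1 - x ^ 2 * q ^ k)
    (by simpa only [even_factor] using (mult x).mul (mult (-x)))
    (by simpa only [odd_factor] using (mult (u * x)).mul (mult (-(u * x))))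
  simp only [even_factor, odd_factor] at even_mul_odd
  rw [(mult x).tprod_mul (mult (-x)), (mult (u * x)).tprod_mul (mult (-(u * x)))] at even_mul_odd
  simp only [qp, ← even_mul_odd, mul_assoc]

end QPochhammer

section Theta

open Real (circleAverage)

variable {q z : ℂ}

/-- The modified Jacobi theta function `θ(z; q) = (z; q)_∞ (q / z; q)_∞`. -/
noncomputable def qTheta (q z : ℂ) : ℂ := qp q z * qp q (q / z)

theorem qTheta_mul_left (hq0 : q ≠ 0) (z : ℂ) : qTheta q (q * z) = qTheta q z⁻¹ := by
  rw [qTheta, qTheta, div_mul_cancel_left₀ hq0, div_inv_eq_mul, mul_comm]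

theorem qTheta_inv (hq : ‖q‖ < 1) (hz : z ≠ 0) : qTheta q z⁻¹ = -(qTheta q z / z) := by
  rw [qTheta, qTheta, div_inv_eq_mul, qp_eq_one_sub_mul_qp hq z⁻¹, qp_eq_one_sub_mul_qp hq z,
    ← div_eq_mul_inv q z]
  field_simp
  ring

theorem differentiableAt_qTheta (hq : ‖q‖ < 1) (hz : z ≠ 0) : DifferentiableAt ℂ (qTheta q) z := by
  have := differentiable_qp hq
  unfold qTheta
  fun_prop (disch := assumption)

/-- The quotient `θ(z; q) / (b / z; q)_∞`. It interpolates between `θ(z; q)` at `b = 0` and the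
entire function `(z; q)_∞` at `b = q`, whose circle average is its value at `0`. -/
noncomputable def qThetaQuotient (q b z : ℂ) : ℂ := qTheta q z / qp q (b / z)

theorem differentiableAt_qThetaQuotient (hq : ‖q‖ < 1) {b : ℂ} (hbz : ‖b‖ < ‖z‖) :
    DifferentiableAt ℂ (qThetaQuotient q b) z := by
  have hz : z ≠ 0 := norm_pos_iff.mp ((norm_nonneg b).trans_lt hbz)
  have := differentiable_qp hq
  have := differentiableAt_qTheta hq hz
  have := qp_div_ne_zero hq hbz
  unfold qThetaQuotient
  fun_prop (disch := assumption)

theorem continuousOn_uncurry_qThetaQuotient (hq : ‖q‖ < 1) :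
    ContinuousOn (Function.uncurry (qThetaQuotient q)) (ball 0 1 ×ˢ sphere 0 1) := by
  rintro ⟨b, z⟩ ⟨hb, hz⟩
  rw [mem_ball_zero_iff] at hb
  have hz0 : z ≠ 0 := ne_zero_of_mem_unit_sphere ⟨z, hz⟩
  rw [mem_sphere_zero_iff_norm] at hz
  have := (differentiable_qp hq).continuous
  have := (differentiableAt_qTheta hq hz0).continuousAt
  have := qp_div_ne_zero hq (hb.trans_eq hz.symm)
  refine ContinuousAt.continuousWithinAt ?_
  simp only [Function.uncurry_def, qThetaQuotient]
  fun_prop (disch := assumption)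

theorem circleIntegrable_qThetaQuotient (hq : ‖q‖ < 1) {b : ℂ} (hb : ‖b‖ < 1) :
    CircleIntegrable (qThetaQuotient q b) 0 1 :=
  ((continuousOn_uncurry_qThetaQuotient hq).uncurry_left b
    (mem_ball_zero_iff.mpr hb)).circleIntegrable zero_le_one

theorem qThetaQuotient_eq_one_sub_mul_add (hq0 : q ≠ 0) (hq : ‖q‖ < 1) {b : ℂ} (hbz : ‖b‖ < ‖z‖) :
    qThetaQuotient q b z = (1 - b) * qThetaQuotient q (q * b) z +
      b * (qThetaQuotient q (q * b) z - qThetaQuotient q (q * b) (q * z)) := by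
  have hz : z ≠ 0 := norm_pos_iff.mp ((norm_nonneg b).trans_lt hbz)
  have ne := qp_div_ne_zero hq hbz
  rw [qThetaQuotient, qThetaQuotient, qThetaQuotient, mul_div_mul_left _ _ hq0,
    qTheta_mul_left hq0, qTheta_inv hq hz, mul_div_assoc q b z]
  rw [qp_eq_one_sub_mul_qp hq] at ne ⊢
  have := right_ne_zero_of_mul ne
  have : z - b ≠ 0 := sub_ne_zero.mpr fun h => hbz.ne (h ▸ rfl)
  field_simp
  ring

theorem circleAverage_qThetaQuotient_eq_one_sub_mul (hq0 : q ≠ 0) (hq : ‖q‖ < 1) {b : ℂ}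
    (hb : ‖b‖ < 1) :
    circleAverage (qThetaQuotient q b) 0 1 =
      (1 - b) * circleAverage (qThetaQuotient q (q * b)) 0 1 := by
  have hqb : ‖q * b‖ < ‖q‖ := by
    rw [norm_mul]
    exact mul_lt_of_lt_one_right (norm_pos_iff.mpr hq0) hb
  exact circleAverage_eq_mul_of_eq_mul_add_mul_sub_comp hq0 hq.le
    (fun z hz _ => differentiableAt_qThetaQuotient hq (hqb.trans_le hz))
    (circleIntegrable_qThetaQuotient hq (hqb.trans hq))
    fun z hz => qThetaQuotient_eq_one_sub_mul_add hq0 hq (hb.trans_eq hz.symm)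

theorem circleAverage_qTheta (hq0 : q ≠ 0) (hq : ‖q‖ < 1) :
    circleAverage (qTheta q) 0 1 = (qp q q)⁻¹ := by
  have ratio_const : circleAverage (qThetaQuotient q q) 0 1 / qp q q =
      circleAverage (qThetaQuotient q 0) 0 1 / qp q 0 := by
    refine apply_eq_apply_zero_of_apply_mul_left_eq (r := 1)
      (φ := fun b => circleAverage (qThetaQuotient q b) 0 1 / qp q b) hq ?_ (fun b hb => ?_)
      (mem_ball_zero_iff.mpr hq)
    · refine (continuousOn_circleAverage_of_continuousOn_uncurry ?_).continuousAt
        (ball_mem_nhds 0 one_pos) |>.div (differentiable_qp hq).continuous.continuousAt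
        (by simp [qp_zero])
      rw [abs_one]
      exact continuousOn_uncurry_qThetaQuotient hq
    · rw [mem_ball_zero_iff] at hb
      have ne := qp_ne_zero hq hb
      rw [qp_eq_one_sub_mul_qp hq b] at ne ⊢
      rw [circleAverage_qThetaQuotient_eq_one_sub_mul hq0 hq hb,
        mul_div_mul_left _ _ (left_ne_zero_of_mul ne)]
  have average_at_q : circleAverage (qThetaQuotient q q) 0 1 = 1 := by
    rw [← qp_zero q, ← (differentiable_qp hq).diffContOnCl.circleAverage (c := 0) (R := 1)]
    refine Real.circleAverage_congr_sphere fun z hz => ?_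
    rw [abs_one, mem_sphere_zero_iff_norm] at hz
    exact mul_div_cancel_right₀ _ (qp_div_ne_zero hq (hq.trans_eq hz.symm))
  have quotient_zero : qThetaQuotient q 0 = qTheta q := by
    ext z; simp only [qThetaQuotient, zero_div, qp_zero, div_one]
  rw [← quotient_zero, ← div_one (circleAverage _ 0 1), ← qp_zero q, ← ratio_const, average_at_q,
    one_div]

end Theta

section AlSalamChihara

open Real (circleAverage)

variable {q a b z : ℂ}

/-- `h(x; l) = (l z; q)_∞ (l / z; q)_∞` as a function of `z`, where `x = (z + z⁻¹) / 2`. -/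
noncomputable def hLaurent (q l z : ℂ) : ℂ := qp q (l * z) * qp q (l / z)

theorem hh_eq_hLaurent_circleMap (q : ℂ) (θ : ℝ) (l : ℂ) :
    hh q θ l = hLaurent q l (circleMap 0 1 θ) := by
  simp only [hh, hLaurent, circleMap_zero, ofReal_one, one_mul, Complex.exp_neg, div_eq_mul_inv]

theorem hLaurent_inv (q l z : ℂ) : hLaurent q l z⁻¹ = hLaurent q l z := by
  simp only [hLaurent, div_eq_mul_inv, inv_inv, mul_comm]

theorem hLaurent_zero (q z : ℂ) : hLaurent q 0 z = 1 := by
  simp only [hLaurent, zero_mul, zero_div, qp_zero, mul_one]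

theorem hLaurent_ne_zero (hq : ‖q‖ < 1) (ha : ‖a‖ < 1) (hz : ‖z‖ = 1) : hLaurent q a z ≠ 0 :=
  mul_ne_zero (qp_mul_ne_zero hq ha hz.le) (qp_div_ne_zero hq (ha.trans_eq hz.symm))

theorem hLaurent_eq_mul_hLaurent_mul_left (hq : ‖q‖ < 1) (l z : ℂ) :
    hLaurent q l z = (1 - l * z) * (1 - l / z) * hLaurent q (q * l) z := by
  rw [hLaurent, hLaurent, qp_eq_one_sub_mul_qp hq (l * z), qp_eq_one_sub_mul_qp hq (l / z),
    mul_assoc q l z, mul_div_assoc q l z]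
  ring

theorem hLaurent_one (hq : ‖q‖ < 1) (z : ℂ) : hLaurent q 1 z = (1 - z⁻¹) * qTheta q z := by
  rw [hLaurent, one_mul, one_div, qp_eq_one_sub_mul_qp hq z⁻¹, qTheta, div_eq_mul_inv]
  ring

theorem hLaurent_one_mul_neg_one_mul_sqrt_mul_neg_sqrt {u : ℂ} (hq : ‖q‖ < 1)
    (hu : u ^ 2 = q) (z : ℂ) :
    hLaurent q 1 z * hLaurent q (-1) z * hLaurent q u z * hLaurent q (-u) z =
      hLaurent q 1 (z ^ 2) := by
  simp only [hLaurent, one_mul, neg_mul, div_eq_mul_inv, ← inv_pow,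
    ← qp_mul_qp_neg_mul_qp_sqrt_mul_qp_neg_sqrt hq hu]
  ring

theorem continuousAt_hLaurent_comp {X : Type*} [TopologicalSpace X] {l w : X → ℂ} {x : X}
    (hq : ‖q‖ < 1) (hl : ContinuousAt l x) (hw : ContinuousAt w x) (hwx : w x ≠ 0) :
    ContinuousAt (fun y => hLaurent q (l y) (w y)) x := by
  have := (differentiable_qp hq).continuous
  unfold hLaurent
  fun_prop (disch := assumption)

theorem circleAverage_hLaurent_one (hq0 : q ≠ 0) (hq : ‖q‖ < 1) :
    circleAverage (hLaurent q 1) 0 1 = 2 / qp q q := by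
  have differentiableAt_annulus (z : ℂ) (hz : ‖q‖ ≤ ‖z‖) : DifferentiableAt ℂ (qTheta q) z :=
    differentiableAt_qTheta hq (norm_pos_iff.mp ((norm_pos_iff.mpr hq0).trans_le hz))
  have integrable : CircleIntegrable (qTheta q) 0 1 :=
    ContinuousOn.circleIntegrable zero_le_one fun z hz =>
      (differentiableAt_annulus z (by simpa [mem_sphere_zero_iff_norm.mp hz] using hq.le)
        ).continuousAt.continuousWithinAt
  have eq_theta (z : ℂ) (hz : ‖z‖ = 1) :
      hLaurent q 1 z = 2 * qTheta q z + -1 * (qTheta q z - qTheta q (q * z)) := by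
    have hz0 : z ≠ 0 := norm_ne_zero_iff.mp (hz ▸ one_ne_zero)
    rw [hLaurent_one hq, qTheta_mul_left hq0, qTheta_inv hq hz0]
    ring
  rw [circleAverage_eq_mul_of_eq_mul_add_mul_sub_comp hq0 hq.le
    (fun z hz _ => differentiableAt_annulus z hz) integrable eq_theta, circleAverage_qTheta hq0 hq,
    div_eq_mul_inv]

/-- The Al-Salam–Chihara weight `h(x; 1, -1, q^{1/2}, -q^{1/2}) / h(x; a, b)` as a function of `z`,
where `x = (z + z⁻¹) / 2`. The numerator is written as `(z²; q)_∞ (z⁻²; q)_∞`, which involves no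
square root of `q`. -/
noncomputable def alSalamChiharaWeight (q a b z : ℂ) : ℂ :=
  hLaurent q 1 (z ^ 2) / (hLaurent q a z * hLaurent q b z)

theorem alSalamChiharaWeight_comm (q a b : ℂ) :
    alSalamChiharaWeight q a b = alSalamChiharaWeight q b a := by
  ext z
  rw [alSalamChiharaWeight, alSalamChiharaWeight, mul_comm (hLaurent q a z)]

theorem alSalamChiharaWeight_inv (q a b z : ℂ) :
    alSalamChiharaWeight q a b z⁻¹ = alSalamChiharaWeight q a b z := by
  simp only [alSalamChiharaWeight, inv_pow, hLaurent_inv]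

theorem continuousOn_uncurry_alSalamChiharaWeight (hq : ‖q‖ < 1) (hb : ‖b‖ < 1) :
    ContinuousOn (Function.uncurry fun a => alSalamChiharaWeight q a b)
      (ball 0 1 ×ˢ sphere 0 1) := by
  rintro ⟨a, z⟩ ⟨ha, hz⟩
  rw [mem_ball_zero_iff] at ha
  have hz0 : z ≠ 0 := ne_zero_of_mem_unit_sphere ⟨z, hz⟩
  rw [mem_sphere_zero_iff_norm] at hz
  have numerator : ContinuousAt (fun p : ℂ × ℂ => hLaurent q 1 (p.2 ^ 2)) (a, z) :=
    continuousAt_hLaurent_comp hq (by fun_prop) (by fun_prop) (pow_ne_zero 2 hz0)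
  have factor_a : ContinuousAt (fun p : ℂ × ℂ => hLaurent q p.1 p.2) (a, z) :=
    continuousAt_hLaurent_comp hq (by fun_prop) (by fun_prop) hz0
  have factor_b : ContinuousAt (fun p : ℂ × ℂ => hLaurent q b p.2) (a, z) :=
    continuousAt_hLaurent_comp hq (by fun_prop) (by fun_prop) hz0
  exact (numerator.div (factor_a.mul factor_b)
    (mul_ne_zero (hLaurent_ne_zero hq ha hz) (hLaurent_ne_zero hq hb hz))).continuousWithinAt

theorem circleIntegrable_alSalamChiharaWeight (hq : ‖q‖ < 1) (ha : ‖a‖ < 1) (hb : ‖b‖ < 1) :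
    CircleIntegrable (alSalamChiharaWeight q a b) 0 1 :=
  ((continuousOn_uncurry_alSalamChiharaWeight hq hb).uncurry_left a
    (mem_ball_zero_iff.mpr ha)).circleIntegrable zero_le_one

/-- The function `K` whose `q`-difference `K(z) - K(qz)` accounts for replacing `a` by `qa` in the
Al-Salam–Chihara weight, see `alSalamChiharaWeight_mul_left`. -/
noncomputable def alSalamChiharaKernel (q a b z : ℂ) : ℂ :=
  z * qTheta q (z ^ 2) /
    (qp q (a * z) * qp q (q * a / z) * (qp q (b * z) * qp q (q * b / z)))

theorem alSalamChiharaKernel_mul_left (hq0 : q ≠ 0) (hq : ‖q‖ < 1) (hz : z ≠ 0) :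
    alSalamChiharaKernel q a b (q * z) = -alSalamChiharaKernel q a b z⁻¹ := by
  have theta_eq : q * z * qTheta q ((q * z) ^ 2) = -(z⁻¹ * qTheta q (z⁻¹ ^ 2)) := by
    have hqz : q * z ^ 2 ≠ 0 := mul_ne_zero hq0 (pow_ne_zero 2 hz)
    rw [show (q * z) ^ 2 = q * (q * z ^ 2) by ring, qTheta_mul_left hq0, qTheta_inv hq hqz,
      qTheta_mul_left hq0, inv_pow]
    field_simp
  have mul_factor (l : ℂ) : qp q (l * (q * z)) * qp q (q * l / (q * z)) =
      qp q (l * z⁻¹) * qp q (q * l / z⁻¹) := by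
    rw [mul_div_mul_left _ _ hq0, div_inv_eq_mul, ← div_eq_mul_inv, mul_comm, mul_left_comm,
      mul_assoc]
  rw [alSalamChiharaKernel, alSalamChiharaKernel, theta_eq, mul_factor, mul_factor, neg_div]

theorem differentiableAt_alSalamChiharaKernel (hq0 : q ≠ 0) (hq : ‖q‖ < 1) (ha : ‖a‖ < 1)
    (hb : ‖b‖ < 1) (hqz : ‖q‖ ≤ ‖z‖) (hz1 : ‖z‖ ≤ 1) :
    DifferentiableAt ℂ (alSalamChiharaKernel q a b) z := by
  have norm_q_pos : 0 < ‖q‖ := norm_pos_iff.mpr hq0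
  have hz0 : z ≠ 0 := norm_pos_iff.mp (norm_q_pos.trans_le hqz)
  have factor_ne_zero {l : ℂ} (hl : ‖l‖ < 1) : qp q (l * z) * qp q (q * l / z) ≠ 0 := by
    refine mul_ne_zero (qp_mul_ne_zero hq hl hz1) (qp_div_ne_zero hq (lt_of_lt_of_le ?_ hqz))
    rw [norm_mul]
    exact mul_lt_of_lt_one_right norm_q_pos hl
  have := differentiable_qp hq
  have := differentiableAt_qTheta hq (pow_ne_zero 2 hz0)
  have := mul_ne_zero (factor_ne_zero ha) (factor_ne_zero hb)
  unfold alSalamChiharaKernel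
  fun_prop (disch := assumption)

theorem alSalamChiharaKernel_eq_div_hLaurent (hq : ‖q‖ < 1) (ha : ‖a‖ < 1) (hb : ‖b‖ < 1)
    (hz : ‖z‖ = 1) :
    alSalamChiharaKernel q a b z = z * (1 - a / z) * (1 - b / z) * qTheta q (z ^ 2) /
      (hLaurent q a z * hLaurent q b z) := by
  have hLaurent_eq (l : ℂ) :
      hLaurent q l z = (1 - l / z) * (qp q (l * z) * qp q (q * l / z)) := by
    rw [hLaurent, qp_eq_one_sub_mul_qp hq (l / z), mul_div_assoc q l z]
    ring
  have ha_ne := hLaurent_ne_zero hq ha hz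
  have hb_ne := hLaurent_ne_zero hq hb hz
  rw [hLaurent_eq] at ha_ne hb_ne
  rw [alSalamChiharaKernel, hLaurent_eq, hLaurent_eq,
    ← mul_div_mul_left _ _ (mul_ne_zero (left_ne_zero_of_mul ha_ne) (left_ne_zero_of_mul hb_ne))]
  congr 1 <;> ring

theorem alSalamChiharaWeight_mul_left (hq0 : q ≠ 0) (hq : ‖q‖ < 1) (ha : ‖a‖ < 1)
    (hb : ‖b‖ < 1) (hz : ‖z‖ = 1) :
    alSalamChiharaWeight q (q * a) b z = (1 - a * b) * alSalamChiharaWeight q a b z +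
      -a * (alSalamChiharaKernel q a b z - alSalamChiharaKernel q a b (q * z)) := by
  have hz0 : z ≠ 0 := norm_ne_zero_iff.mp (hz ▸ one_ne_zero)
  have ha_ne := hLaurent_ne_zero hq ha hz
  have weight_eq : alSalamChiharaWeight q (q * a) b z =
      (1 - a * z) * (1 - a / z) * alSalamChiharaWeight q a b z := by
    rw [hLaurent_eq_mul_hLaurent_mul_left hq] at ha_ne
    rw [alSalamChiharaWeight, alSalamChiharaWeight, hLaurent_eq_mul_hLaurent_mul_left hq a,
      mul_assoc (_ * _), ← mul_div_assoc, mul_div_mul_left _ _ (left_ne_zero_of_mul ha_ne)]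
  have hb_ne := hLaurent_ne_zero hq hb hz
  rw [weight_eq, alSalamChiharaKernel_mul_left hq0 hq hz0,
    alSalamChiharaKernel_eq_div_hLaurent hq ha hb hz,
    alSalamChiharaKernel_eq_div_hLaurent hq ha hb (by rw [norm_inv, hz, inv_one]),
    alSalamChiharaWeight, hLaurent_one hq, hLaurent_inv, hLaurent_inv, inv_pow,
    qTheta_inv hq (pow_ne_zero 2 hz0)]
  field_simp
  ring

theorem circleAverage_alSalamChiharaWeight_mul_left (hq0 : q ≠ 0) (hq : ‖q‖ < 1) (ha : ‖a‖ < 1)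
    (hb : ‖b‖ < 1) :
    circleAverage (alSalamChiharaWeight q (q * a) b) 0 1 =
      (1 - a * b) * circleAverage (alSalamChiharaWeight q a b) 0 1 :=
  circleAverage_eq_mul_of_eq_mul_add_mul_sub_comp hq0 hq.le
    (fun _ => differentiableAt_alSalamChiharaKernel hq0 hq ha hb)
    (circleIntegrable_alSalamChiharaWeight hq ha hb)
    fun _ => alSalamChiharaWeight_mul_left hq0 hq ha hb

theorem circleAverage_alSalamChiharaWeight_mul_qp (hq0 : q ≠ 0) (hq : ‖q‖ < 1) (ha : ‖a‖ < 1)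
    (hb : ‖b‖ < 1) :
    circleAverage (alSalamChiharaWeight q a b) 0 1 * qp q (a * b) =
      circleAverage (alSalamChiharaWeight q 0 b) 0 1 := by
  have product_const : circleAverage (alSalamChiharaWeight q a b) 0 1 * qp q (a * b) =
      circleAverage (alSalamChiharaWeight q 0 b) 0 1 * qp q (0 * b) := by
    refine apply_eq_apply_zero_of_apply_mul_left_eq (r := 1)
      (φ := fun a => circleAverage (alSalamChiharaWeight q a b) 0 1 * qp q (a * b)) hq ?_
      (fun x hx => ?_) (mem_ball_zero_iff.mpr ha)
    · have average_continuousOn := continuousOn_circleAverage_of_continuousOn_uncurry (R := 1)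
        (by simpa only [abs_one] using continuousOn_uncurry_alSalamChiharaWeight hq hb)
      have := (differentiable_qp hq).continuous
      exact (average_continuousOn.continuousAt (ball_mem_nhds 0 one_pos)).mul (by fun_prop)
    · rw [mem_ball_zero_iff] at hx
      rw [circleAverage_alSalamChiharaWeight_mul_left hq0 hq hx hb,
        qp_eq_one_sub_mul_qp hq (x * b), mul_assoc q x b]
      ring
  simpa only [zero_mul, qp_zero, mul_one] using product_const

theorem circleAverage_alSalamChiharaWeight_zero_zero (hq0 : q ≠ 0) (hq : ‖q‖ < 1) :
    circleAverage (alSalamChiharaWeight q 0 0) 0 1 = 2 / qp q q := by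
  have weight_eq : alSalamChiharaWeight q 0 0 = fun z => hLaurent q 1 (z ^ 2) := by
    ext z
    simp only [alSalamChiharaWeight, hLaurent_zero, mul_one, div_one]
  have integrable : CircleIntegrable (hLaurent q 1) 0 1 :=
    ContinuousOn.circleIntegrable zero_le_one fun z hz =>
      (continuousAt_hLaurent_comp hq continuousAt_const continuousAt_id
        (ne_zero_of_mem_unit_sphere ⟨z, hz⟩)).continuousWithinAt
  rw [weight_eq, circleAverage_comp_pow two_ne_zero (by simpa only [one_pow] using integrable),
    one_pow, circleAverage_hLaurent_one hq0 hq]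

theorem circleAverage_alSalamChiharaWeight (hq0 : q ≠ 0) (hq : ‖q‖ < 1) (ha : ‖a‖ < 1)
    (hb : ‖b‖ < 1) :
    circleAverage (alSalamChiharaWeight q a b) 0 1 = 2 / (qp q q * qp q (a * b)) := by
  have norm_zero_lt : ‖(0 : ℂ)‖ < 1 := norm_zero.trans_lt one_pos
  have hab : qp q (a * b) ≠ 0 := qp_mul_ne_zero hq ha hb.le
  have average_zero_left : circleAverage (alSalamChiharaWeight q 0 b) 0 1 = 2 / qp q q := by
    have := circleAverage_alSalamChiharaWeight_mul_qp hq0 hq hb norm_zero_lt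
    rwa [mul_zero, qp_zero, mul_one, alSalamChiharaWeight_comm,
      circleAverage_alSalamChiharaWeight_zero_zero hq0 hq] at this
  rw [← div_div, eq_div_iff hab, circleAverage_alSalamChiharaWeight_mul_qp hq0 hq ha hb,
    average_zero_left]

end AlSalamChihara

theorem integral_step_five (q u a b : ℂ) (hq0 : 0 < ‖q‖) (hq : ‖q‖ < 1) (hu : u ^ 2 = q)
    (ha : ‖a‖ < 1) (hb : ‖b‖ < 1) :
    ∫ θ in (0:ℝ)..Real.pi,
      (hh q θ 1 * hh q θ (-1) * hh q θ u * hh q θ (-u)) / (hh q θ a * hh q θ b)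
      = 2 * (Real.pi : ℂ) / (qp q q * qp q (a * b)) := by
  simp only [hh_eq_hLaurent_circleMap, hLaurent_one_mul_neg_one_mul_sqrt_mul_neg_sqrt hq hu]
  calc ∫ θ in (0:ℝ)..Real.pi, alSalamChiharaWeight q a b (circleMap 0 1 θ)
      = Real.pi • Real.circleAverage (alSalamChiharaWeight q a b) 0 1 :=
        intervalIntegral_zero_pi_eq_pi_smul_circleAverage
          (circleIntegrable_alSalamChiharaWeight hq ha hb)
          fun z _ => alSalamChiharaWeight_inv q a b z
    _ = 2 * (Real.pi : ℂ) / (qp q q * qp q (a * b)) := by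
        rw [circleAverage_alSalamChiharaWeight (norm_pos_iff.mp hq0) hq ha hb, real_smul]
        ring
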